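/- For every n ∈ ℕ and all 0 ≤ i < j ≤ 2ℓ the following sum vanishes: Σ_{k=i}^{min(2ℓ, n+j)} (-1)^k q^{(2k+1)(k-i)+j(2k+1)+2k(2ℓ+n+1)-k²} · [(q²;q²)_k (q²;q²)_{k+i} / (q²;q²)_{2k}] · [(q^{-4ℓ};q²)_k (q^{-2j-2n};q²)_k / ((q²;q²)_k (q^{4ℓ+4};q²)_k)] · [(q^{-2k};q²)_{k-i} / (q²;q²)_{k-i}] · [(q^{2k+2};q²)_{n+j-k} / (q^{4k+4};q²)_{n+j-k}] · R_k(μ(j);1,1,q^{-2n-2j-2},q^{-4ℓ-2};q²) = 0. (This identity expresses the vanishing of the coefficient of x^{n+j-i} in the (i,j)-entry of P_n, so that each entry of P_n has degree at most n.) -/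

import Mathlib

open Finset Polynomial MeasureTheory Matrix
open scoped BigOperators ComplexOrder

noncomputable section

/-- q-shifted factorial `(a;p)_n`. -/
def qp (a p : ℂ) (n : ℕ) : ℂ := ∏ j ∈ Finset.range n, (1 - a * p ^ j)

/-- q-Racah polynomial `R_n(μ(x);α,β,γ,δ;p)`. -/
def qRacah (p α β γ δ : ℂ) (n x : ℕ) : ℂ :=
  ∑ k ∈ Finset.range (min n x + 1),
    qp (p ^ (-(n : ℤ))) p k * qp (α * β * p ^ (n + 1)) p k *
        qp (p ^ (-(x : ℤ))) p k * qp (γ * δ * p ^ (x + 1)) p k /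
      (qp (α * p) p k * qp (β * δ * p) p k * qp (γ * p) p k * qp p p k) * p ^ k

/-- `IsUltra C` says that for each base `p`, parameter `β` and degree `n`, `C p β n` is
the continuous q-ultraspherical polynomial: it has degree at most `n` and its values at
`(z+z⁻¹)/2` are given by the symmetric Laurent sum. -/
def IsUltra (C : ℂ → ℂ → ℕ → Polynomial ℂ) : Prop :=
  ∀ (p β : ℂ) (n : ℕ),
    (C p β n).degree ≤ (n : ℕ) ∧
      ∀ z : ℂ, z ≠ 0 →
        (C p β n).eval ((z + z⁻¹) / 2) =
          ∑ r ∈ Finset.range (n + 1),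
            qp β p r * qp β p (n - r) / (qp p p r * qp p p (n - r)) * z ^ ((n : ℤ) - 2 * r)

/-- The matrix-valued polynomial `P_n` (entries in `Polynomial ℂ`); here `L = 2ℓ`. -/
def Pm (q : ℂ) (L : ℕ) (C : ℂ → ℂ → ℕ → Polynomial ℂ) (n : ℕ) :
    Matrix (Fin (L + 1)) (Fin (L + 1)) (Polynomial ℂ) :=
  Matrix.of fun i j =>
    ∑ k ∈ Finset.Icc (i : ℕ) (min L (n + (j : ℕ))),
      Polynomial.C
          ((-1 : ℂ) ^ k *
            q ^ ((n : ℤ) + (2 * (k : ℤ) + 1) * ((k : ℤ) - ((i : ℕ) : ℤ)) +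
                ((j : ℕ) : ℤ) * (2 * (k : ℤ) + 1) + 2 * (k : ℤ) * ((L : ℤ) + (n : ℤ) + 1) -
                (k : ℤ) ^ 2) *
            (qp (q ^ 2) (q ^ 2) k * qp (q ^ 2) (q ^ 2) (k + (i : ℕ)) /
              (qp (q ^ 2) (q ^ 2) (2 * k) * qp (q ^ 2) (q ^ 2) (i : ℕ))) *
            (qp (q ^ (-(2 * (L : ℤ)))) (q ^ 2) k *
                qp (q ^ (-(2 * ((j : ℕ) : ℤ) + 2 * (n : ℤ)))) (q ^ 2) k /
              (qp (q ^ 2) (q ^ 2) k * qp (q ^ (2 * (L : ℤ) + 4)) (q ^ 2) k)) *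
            (qp (q ^ 2) (q ^ 2) (n + (j : ℕ) - k) /
              qp (q ^ (4 * (k : ℤ) + 4)) (q ^ 2) (n + (j : ℕ) - k)) *
            qRacah (q ^ 2) 1 1 (q ^ (-(2 * (n : ℤ) + 2 * ((j : ℕ) : ℤ) + 2)))
              (q ^ (-(2 * (L : ℤ) + 2))) k (j : ℕ)) *
        (C (q ^ 2) (q ^ (-(2 * (k : ℤ)))) (k - (i : ℕ)) *
          C (q ^ 2) (q ^ (2 * (k : ℤ) + 2)) (n + (j : ℕ) - k))

/-- Evaluation of the matrix-valued polynomial `P_n` at a point. -/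
def evP (q : ℂ) (L : ℕ) (C : ℂ → ℂ → ℕ → Polynomial ℂ) (n : ℕ) (x : ℂ) :
    Matrix (Fin (L + 1)) (Fin (L + 1)) ℂ :=
  (Pm q L C n).map (Polynomial.eval x)

/-- The coefficients `α_t(m,n)` of the weight. -/
def alphaC (q : ℂ) (L m n t : ℕ) : ℂ :=
  q ^ (2 * (n : ℤ) * ((L : ℤ) + 1) - (n : ℤ) ^ 2 - (2 * (L : ℤ) + 3) * (t : ℤ) + (t : ℤ) ^ 2 -
      (L : ℤ) + (m : ℤ)) *
    ((1 - q ^ (2 * (L : ℤ) + 2)) / (1 - q ^ (2 * (m : ℤ) + 2))) *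
    (qp (q ^ 2) (q ^ 2) (L - n) * qp (q ^ 2) (q ^ 2) n / qp (q ^ 2) (q ^ 2) L) *
    ((-1 : ℂ) ^ ((m : ℤ) - (t : ℤ)) * qp (q ^ (2 * (m : ℤ) - 2 * (L : ℤ))) (q ^ 2) (n - t) /
      qp (q ^ (2 * (m : ℤ) + 4)) (q ^ 2) (n - t)) *
    (qp (q ^ (2 * (L : ℤ) + 4 - 2 * (t : ℤ))) (q ^ 2) t / qp (q ^ 2) (q ^ 2) t)

/-- The matrix weight `W(x)`. -/
def Wm (q : ℂ) (L : ℕ) (x : ℂ) : Matrix (Fin (L + 1)) (Fin (L + 1)) ℂ :=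
  Matrix.of fun i j =>
    ∑ t ∈ Finset.range (max (i : ℕ) (j : ℕ) + 1),
      alphaC q L (min (i : ℕ) (j : ℕ)) (max (i : ℕ) (j : ℕ)) t *
        (Polynomial.Chebyshev.U ℂ
            ((min (i : ℕ) (j : ℕ) : ℤ) + (max (i : ℕ) (j : ℕ) : ℤ) - 2 * (t : ℤ))).eval x

/-- The antidiagonal involution `J`. -/
def Jm (L : ℕ) : Matrix (Fin (L + 1)) (Fin (L + 1)) ℂ :=
  Matrix.of fun i j => if (i : ℕ) + (j : ℕ) = L then 1 else 0

/-- The diagonal leading-coefficient matrix `Γ_n`. -/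
def Gam (q : ℂ) (L n : ℕ) : Matrix (Fin (L + 1)) (Fin (L + 1)) ℂ :=
  Matrix.diagonal fun i =>
    2 ^ n * q ^ n * qp (q ^ (2 * ((i : ℕ) : ℤ) + 2)) (q ^ 2) n *
        qp (q ^ (2 * (L : ℤ) - 2 * ((i : ℕ) : ℤ) + 2)) (q ^ 2) n /
      (qp (q ^ 2) (q ^ 2) n * qp (q ^ (2 * (L : ℤ) + 4)) (q ^ 2) n)

/-- The squared-norm matrix `G_m`. -/
def Gmat (q : ℂ) (L m : ℕ) : Matrix (Fin (L + 1)) (Fin (L + 1)) ℂ :=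
  Matrix.diagonal fun i =>
    q ^ (2 * (m : ℤ) - (L : ℤ)) * (1 - q ^ (2 * (L : ℤ) + 2)) ^ 2 /
      ((1 - q ^ (2 * (m : ℤ) + 2 * ((i : ℕ) : ℤ) + 2)) *
        (1 - q ^ (2 * (L : ℤ) - 2 * ((i : ℕ) : ℤ) + 2 * (m : ℤ) + 2)))

/-- The unipotent lower triangular matrix `L(x)` of the LDU decomposition. -/
def Lm (q : ℂ) (L : ℕ) (C : ℂ → ℂ → ℕ → Polynomial ℂ) (x : ℂ) :
    Matrix (Fin (L + 1)) (Fin (L + 1)) ℂ :=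
  Matrix.of fun m k =>
    if (k : ℕ) ≤ (m : ℕ) then
      q ^ (((m : ℕ) : ℤ) - ((k : ℕ) : ℤ)) * qp (q ^ 2) (q ^ 2) (m : ℕ) *
          qp (q ^ 2) (q ^ 2) (2 * (k : ℕ) + 1) /
          (qp (q ^ 2) (q ^ 2) ((m : ℕ) + (k : ℕ) + 1) * qp (q ^ 2) (q ^ 2) (k : ℕ)) *
        (C (q ^ 2) (q ^ (2 * (k : ℕ) + 2)) ((m : ℕ) - (k : ℕ))).eval x
    else 0

/-- The claimed inverse of `L(x)`. -/
def Linv (q : ℂ) (L : ℕ) (C : ℂ → ℂ → ℕ → Polynomial ℂ) (x : ℂ) :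
    Matrix (Fin (L + 1)) (Fin (L + 1)) ℂ :=
  Matrix.of fun k n =>
    if (n : ℕ) ≤ (k : ℕ) then
      q ^ ((2 * ((k : ℕ) : ℤ) + 1) * (((k : ℕ) : ℤ) - ((n : ℕ) : ℤ))) *
          qp (q ^ 2) (q ^ 2) (k : ℕ) * qp (q ^ 2) (q ^ 2) ((k : ℕ) + (n : ℕ)) /
          (qp (q ^ 2) (q ^ 2) (2 * (k : ℕ)) * qp (q ^ 2) (q ^ 2) (n : ℕ)) *
        (C (q ^ 2) (q ^ (-(2 * ((k : ℕ) : ℤ)))) ((k : ℕ) - (n : ℕ))).eval x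
    else 0

/-- The constants `c_k(ℓ)`. -/
def ckC (q : ℂ) (L k : ℕ) : ℂ :=
  q ^ (-(L : ℤ)) / 4 * (1 - q ^ (4 * k + 2)) * qp (q ^ 2) (q ^ 2) (L + k + 1) *
      qp (q ^ 2) (q ^ 2) (L - k) * qp (q ^ 2) (q ^ 2) k ^ 4 /
    (qp (q ^ 2) (q ^ 2) (2 * k + 1) ^ 2 * qp (q ^ 2) (q ^ 2) L ^ 2)

/-- The diagonal part `T(x)` of the LDU decomposition. -/
def Tm (q : ℂ) (L : ℕ) (x : ℂ) : Matrix (Fin (L + 1)) (Fin (L + 1)) ℂ :=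
  Matrix.diagonal fun k =>
    ckC q L (k : ℕ) *
      (4 * ∏ j ∈ Finset.Icc 1 (k : ℕ), (1 - 2 * (2 * x ^ 2 - 1) * q ^ (2 * j) + q ^ (4 * j)))

/-- The coefficient matrix `M₁(z)` of the q-difference operator `D₁`. -/
def M1f (q : ℂ) (L : ℕ) (z : ℂ) : Matrix (Fin (L + 1)) (Fin (L + 1)) ℂ :=
  Matrix.of fun i j =>
    if (j : ℕ) = (i : ℕ) + 1 then
      -(q ^ (1 - ((i : ℕ) : ℤ)) * (1 - q ^ (2 * (i : ℕ) + 2)) / (1 - q ^ 2) ^ 2 *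
        (z / (1 - z ^ 2)))
    else if (j : ℕ) = (i : ℕ) then
      q ^ (1 - ((i : ℕ) : ℤ)) / (1 - q ^ 2) ^ 2 *
        ((1 - q ^ (2 * (i : ℕ) + 2) * z ^ 2) / (1 - z ^ 2))
    else 0

/-- `M₂(z) = J M₁(z) J`. -/
def M2f (q : ℂ) (L : ℕ) (z : ℂ) : Matrix (Fin (L + 1)) (Fin (L + 1)) ℂ :=
  Jm L * M1f q L z * Jm L

/-- The eigenvalue matrix `Λ_n(1)`. -/
def Lam1 (q : ℂ) (L n : ℕ) : Matrix (Fin (L + 1)) (Fin (L + 1)) ℂ :=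
  Matrix.diagonal fun j =>
    (q ^ (-((j : ℕ) : ℤ) - (n : ℤ) - 1) + q ^ (((j : ℕ) : ℤ) + (n : ℤ) + 1)) / (q⁻¹ - q) ^ 2

/-- The eigenvalue matrix `Λ_n(2) = J Λ_n(1) J`. -/
def Lam2 (q : ℂ) (L n : ℕ) : Matrix (Fin (L + 1)) (Fin (L + 1)) ℂ :=
  Jm L * Lam1 q L n * Jm L

/-- The diagonal coefficient matrix `K₁(z)` of the decoupled operator. -/
def K1f (q : ℂ) (L : ℕ) (z : ℂ) : Matrix (Fin (L + 1)) (Fin (L + 1)) ℂ :=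
  Matrix.diagonal fun i =>
    q ^ (1 - ((i : ℕ) : ℤ)) / (1 - q ^ 2) ^ 2 *
      ((1 - q ^ (2 * (i : ℕ) + 2) * z ^ 2) / (1 - z ^ 2))

/-- The symmetric Laurent polynomial `Ĉ_k(z;β|p)`. -/
def Chat (p β : ℂ) (k : ℕ) (z : ℂ) : ℂ :=
  ∑ r ∈ Finset.range (k + 1),
    qp β p r * qp β p (k - r) / (qp p p r * qp p p (k - r)) * z ^ ((k : ℤ) - 2 * (r : ℤ))

/-- The matrix polynomials `R_n(x) = L(x)ᵀ P_n(x) Γ_n⁻¹`. -/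
def Rmat (q : ℂ) (L : ℕ) (C : ℂ → ℂ → ℕ → Polynomial ℂ) (n : ℕ) (x : ℂ) :
    Matrix (Fin (L + 1)) (Fin (L + 1)) ℂ :=
  (Lm q L C x)ᵀ * evP q L C n x * (Gam q L n)⁻¹

/-!
Put `p = q²` and `N = n + j`. The parameters `(α, β)` and `(γ, δ)` of a `q`-Racah polynomial trade
places when its degree and its variable do, so `R_k(μ(j))` is the value at `k` of a polynomial of
degree `j` with `α = p^{-N-1}`, `β = p^{-L-1}`, `γ = δ = 1`. Apart from this factor, the `k`-th
summand is a constant times `w(k) φ_i(k)`, where `w` is the orthogonality weight of these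
polynomials on `{0, …, min L N}` and `φ_i(k) = (p^{-k}, p^{k+1}; p)_i` has degree `i < j`. The sum
therefore vanishes by orthogonality.

Orthogonality itself holds because the `q`-difference operator is symmetric for `w` (detailed
balance makes the Wronskian sum telescope, and the boundary term vanishes at the right end) and
lower bidiagonal on the basis `φ_m` with pairwise distinct diagonal entries: pairing with an
eigenfunction of degree `j` kills `φ_0, …, φ_{j-1}` one after the other.
-/

section DifferenceOperator

variable {R : Type*} [CommRing R]

/-- The three-term difference operator
`f ↦ (x ↦ b x * (f (x + 1) - f x) + d x * (f (x - 1) - f x))` on sequences. At `x = 0`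
the truncated subtraction `0 - 1 = 0` makes the second term vanish. -/
def differenceOperator (b d : ℕ → R) : (ℕ → R) →ₗ[R] (ℕ → R) where
  toFun f x := b x * (f (x + 1) - f x) + d x * (f (x - 1) - f x)
  map_add' f g := by ext x; simp only [Pi.add_apply]; ring
  map_smul' c f := by ext x; simp only [Pi.smul_apply, smul_eq_mul, RingHom.id_apply]; ring

lemma differenceOperator_apply (b d f : ℕ → R) (x : ℕ) :
    differenceOperator b d f x = b x * (f (x + 1) - f x) + d x * (f (x - 1) - f x) :=
  rfl

/-- The bilinear form `(g, f) ↦ ∑ x ≤ M, w x * (f x * g x)` on sequences, for the weight `w` on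
`{0, …, M}`. -/
def weightedPairing (w : ℕ → R) (M : ℕ) : (ℕ → R) →ₗ[R] (ℕ → R) →ₗ[R] R :=
  ∑ x ∈ range (M + 1), w x • (LinearMap.mul R R).compl₁₂ (LinearMap.proj x) (LinearMap.proj x)

lemma weightedPairing_apply (w : ℕ → R) (M : ℕ) (g f : ℕ → R) :
    weightedPairing w M g f = ∑ x ∈ range (M + 1), w x * (f x * g x) := by
  simp [weightedPairing, mul_comm]

lemma sum_range_wronskian_differenceOperator {b d w : ℕ → R}
    (hw : ∀ x, w (x + 1) * d (x + 1) = w x * b x) (f g : ℕ → R) (n : ℕ) :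
    ∑ x ∈ range (n + 1),
        w x * (differenceOperator b d f x * g x - f x * differenceOperator b d g x) =
      w n * b n * (f (n + 1) * g n - f n * g (n + 1)) := by
  induction n with
  | zero =>
    simp only [differenceOperator_apply, zero_add, sum_range_one]
    ring
  | succ n ih =>
    rw [sum_range_succ, ih, ← hw]
    simp only [differenceOperator_apply, Nat.add_sub_cancel]
    ring

lemma weightedPairing_differenceOperator {b d w : ℕ → R} {M : ℕ}
    (hw : ∀ x, w (x + 1) * d (x + 1) = w x * b x) (hM : b M = 0) (f g : ℕ → R) :
    weightedPairing w M g (differenceOperator b d f) =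
      weightedPairing w M (differenceOperator b d g) f := by
  rw [← sub_eq_zero, weightedPairing_apply, weightedPairing_apply, ← sum_sub_distrib]
  simp only [← mul_sub]
  rw [sum_range_wronskian_differenceOperator hw, hM, mul_zero, zero_mul]

end DifferenceOperator

section Bidiagonal

variable {R V : Type*} [CommRing R] [AddCommGroup V] [Module R V]
  {A : V →ₗ[R] V} {φ : ℕ → V} {ε c : ℕ → R}

lemma map_sum_eq_smul_of_bidiagonal (h0 : A (φ 0) = ε 0 • φ 0)
    (hA : ∀ m, A (φ (m + 1)) = ε (m + 1) • φ (m + 1) + c (m + 1) • φ m) {a : ℕ → R} {n : ℕ}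
    (ha : ∀ m < n, a (m + 1) * c (m + 1) = a m * (ε n - ε m)) :
    A (∑ m ∈ range (n + 1), a m • φ m) = ε n • ∑ m ∈ range (n + 1), a m • φ m := by
  have partial_sum (t : ℕ) (ht : t ≤ n) : A (∑ m ∈ range (t + 1), a m • φ m) =
      ε n • ∑ m ∈ range (t + 1), a m • φ m - (a t * (ε n - ε t)) • φ t := by
    induction t with
    | zero =>
      simp only [zero_add, sum_range_one, map_smul, h0]
      module
    | succ t ih =>
      rw [sum_range_succ, map_add, ih (by lia), map_smul, hA, ← ha t (by lia)]
      module
  rw [partial_sum n le_rfl, sub_self, mul_zero, zero_smul, sub_zero]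

lemma eigenfunctional_apply_eq_zero_of_bidiagonal [NoZeroDivisors R] (h0 : A (φ 0) = ε 0 • φ 0)
    (hA : ∀ m, A (φ (m + 1)) = ε (m + 1) • φ (m + 1) + c (m + 1) • φ m) {T : V →ₗ[R] R} {μ : R}
    (hT : ∀ v, T (A v) = μ * T v) {i : ℕ} (hμ : ∀ m ≤ i, ε m ≠ μ) : T (φ i) = 0 := by
  induction i with
  | zero =>
    refine (mul_eq_zero.1 ?_).resolve_left (sub_ne_zero.2 (hμ 0 le_rfl))
    have h := hT (φ 0)
    rw [h0, map_smul, smul_eq_mul] at h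
    linear_combination h
  | succ i ih =>
    refine (mul_eq_zero.1 ?_).resolve_left (sub_ne_zero.2 (hμ (i + 1) le_rfl))
    have h := hT (φ (i + 1))
    rw [hA, map_add, map_smul, map_smul, ih fun m hm => hμ m (by lia), smul_zero, add_zero,
      smul_eq_mul] at h
    linear_combination h

end Bidiagonal

section Powers

lemma zpow_neg_succ_mul {G₀ : Type*} [GroupWithZero G₀] {a : G₀} (ha : a ≠ 0) (n : ℕ) :
    a ^ (-((n + 1 : ℕ) : ℤ)) * a = a ^ (-(n : ℤ)) := by
  rw [← zpow_add_one₀ ha, Nat.cast_succ, neg_add_rev, neg_add_cancel_comm]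

lemma pow_ne_one_of_not_isOfFinOrder {M : Type*} [Monoid M] {a : M} (ha : ¬IsOfFinOrder a) {n : ℕ}
    (hn : n ≠ 0) : a ^ n ≠ 1 :=
  fun h => ha (isOfFinOrder_iff_pow_eq_one.2 ⟨n, hn.bot_lt, h⟩)

lemma add_one_choose_two_mul_two (n : ℕ) : (n + 1).choose 2 * 2 = (n + 1) * n := by
  rw [← Nat.add_one_mul_choose_eq n 1, Nat.choose_one_right]

lemma add_add_one_choose_two (m n : ℕ) :
    (m + n + 1).choose 2 = (m + 1).choose 2 + (n + 1).choose 2 + m * n := by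
  induction n with
  | zero => simp
  | succ n ih =>
    rw [← add_assoc, Nat.choose_succ_succ (m + n + 1) 1, Nat.choose_succ_succ (n + 1) 1, ih,
      Nat.choose_one_right, Nat.choose_one_right]
    ring

end Powers

section QPochhammer

variable {p : ℂ}

lemma qp_zero (a p : ℂ) : qp a p 0 = 1 := by
  rw [qp, range_zero, prod_empty]

lemma qp_succ (a p : ℂ) (n : ℕ) : qp a p (n + 1) = qp a p n * (1 - a * p ^ n) :=
  prod_range_succ _ _

lemma qp_add (a p : ℂ) (m n : ℕ) : qp a p (m + n) = qp a p m * qp (a * p ^ m) p n := by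
  simp only [qp, prod_range_add, pow_add, mul_assoc]

lemma qp_succ_left (a p : ℂ) (n : ℕ) : qp a p (n + 1) = (1 - a) * qp (a * p) p n := by
  rw [add_comm, qp_add, qp_succ, qp_zero, pow_zero, pow_one, mul_one, one_mul]

lemma qp_mul_succ (a p : ℂ) (n : ℕ) :
    qp (a * p) p (n + 1) = qp (a * p) p n * (1 - a * p ^ (n + 1)) := by
  rw [qp_succ, mul_assoc, ← pow_succ']

lemma qp_self_succ (p : ℂ) (n : ℕ) : qp p p (n + 1) = qp p p n * (1 - p ^ (n + 1)) := by
  rw [qp_succ, ← pow_succ']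

lemma qp_mul_div_succ (a p : ℂ) {b : ℂ} (hb : b ≠ 0) (n : ℕ) :
    qp (a * p / b) p (n + 1) = qp (a * p / b) p n * ((b - a * p ^ (n + 1)) / b) := by
  rw [qp_succ, sub_div, div_self hb, pow_succ', div_mul_eq_mul_div, mul_assoc]

lemma qp_zpow_neg_eq_zero (hp : p ≠ 0) {x m : ℕ} (hx : x < m) : qp (p ^ (-(x : ℤ))) p m = 0 := by
  refine prod_eq_zero (mem_range.2 hx) ?_
  rw [← zpow_natCast, ← zpow_add₀ hp, neg_add_cancel, zpow_zero, sub_self]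

lemma qp_self_ne_zero (hp : ¬IsOfFinOrder p) (n : ℕ) : qp p p n ≠ 0 := by
  refine prod_ne_zero_iff.2 fun m _ => sub_ne_zero.2 ?_
  rw [← pow_succ']
  exact (pow_ne_one_of_not_isOfFinOrder hp m.succ_ne_zero).symm

lemma qp_pow_succ (hp : ¬IsOfFinOrder p) (m n : ℕ) :
    qp (p ^ (m + 1)) p n = qp p p (m + n) / qp p p m := by
  rw [eq_div_iff (qp_self_ne_zero hp m), qp_add, ← pow_succ', mul_comm]

lemma qp_zpow_neg_add (hp0 : p ≠ 0) (hp : ¬IsOfFinOrder p) (m n : ℕ) :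
    qp (p ^ (-((m + n : ℕ) : ℤ))) p n =
      (-1) ^ n * p ^ (-(((n + 1).choose 2 + m * n : ℕ) : ℤ)) * (qp p p (m + n) / qp p p m) := by
  rw [← mul_div_assoc, eq_div_iff (qp_self_ne_zero hp m)]
  induction n with
  | zero => simp [qp_zero]
  | succ n ih =>
    have exponent : (n + 1 + 1).choose 2 + m * (n + 1) =
        ((n + 1).choose 2 + m * n) + (m + n + 1) := by
      rw [Nat.choose_succ_succ (n + 1) 1, Nat.choose_one_right]
      ring
    rw [qp_succ_left, ← add_assoc m n 1, zpow_neg_succ_mul hp0, mul_assoc, ih, exponent, qp_succ]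
    simp only [_root_.zpow_neg, zpow_natCast]
    field_simp
    ring

end QPochhammer

section QRacah

/-- The polynomial `(p^{-x}, c p^{x+1}; p)_m` of degree `m` in `μ(x) = p^{-x} + c p^{x+1}`, where
`c = γδ`: the basis in which `R_n` is expanded. -/
def qRacahBasis (p c : ℂ) (m x : ℕ) : ℂ :=
  qp (p ^ (-(x : ℤ))) p m * qp (c * p ^ (x + 1)) p m

/-- The coefficient of `qRacahBasis p (γ * δ) m` in the `q`-Racah polynomial `R_n`. -/
def qRacahCoeff (p α β γ δ : ℂ) (n m : ℕ) : ℂ :=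
  qp (p ^ (-(n : ℤ))) p m * qp (α * β * p ^ (n + 1)) p m /
    (qp (α * p) p m * qp (β * δ * p) p m * qp (γ * p) p m * qp p p m) * p ^ m

/-- The coefficient `B(x)` of `y(x + 1) - y(x)` in the `q`-difference equation of the `q`-Racah
polynomials. -/
def qRacahRaise (p α β γ δ : ℂ) (x : ℕ) : ℂ :=
  (1 - α * p ^ (x + 1)) * (1 - β * δ * p ^ (x + 1)) * (1 - γ * p ^ (x + 1)) *
      (1 - γ * δ * p ^ (x + 1)) /
    ((1 - γ * δ * p ^ (2 * x + 1)) * (1 - γ * δ * p ^ (2 * x + 2)))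

/-- The coefficient `D(x)` of `y(x - 1) - y(x)` in the `q`-difference equation of the `q`-Racah
polynomials. For `γδ = 1` its value at `x = 0` is the quotient `0 / 0 = 0`, which is the
wanted one. -/
def qRacahLower (p α β γ δ : ℂ) (x : ℕ) : ℂ :=
  p * (1 - p ^ x) * (1 - δ * p ^ x) * (β - γ * p ^ x) * (α - γ * δ * p ^ x) /
    ((1 - γ * δ * p ^ (2 * x)) * (1 - γ * δ * p ^ (2 * x + 1)))

/-- The eigenvalue of the `q`-Racah difference operator on the polynomial of degree `n`. -/
def qRacahEigenvalue (p α β : ℂ) (n : ℕ) : ℂ :=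
  (1 - p ^ n) * (1 - α * β * p ^ (n + 1)) / p ^ n

/-- The coefficient of the basis element of degree `m - 1` in the image of the one of degree `m`
under the `q`-Racah difference operator. -/
def qRacahSubdiagonal (p α β γ δ : ℂ) (m : ℕ) : ℂ :=
  -((1 - p ^ m) * (1 - α * p ^ m) * (1 - β * δ * p ^ m) * (1 - γ * p ^ m) / p ^ m)

/-- The orthogonality weight of the `q`-Racah polynomials, up to the constant factor
`1 / (1 - γδp)`. -/
def qRacahWeight (p α β γ δ : ℂ) (x : ℕ) : ℂ :=
  (1 - γ * δ * p ^ (2 * x + 1)) *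
      (qp (α * p) p x * qp (β * δ * p) p x * qp (γ * p) p x * qp (γ * δ * p) p x) /
    (qp p p x * qp (γ * δ * p / α) p x * qp (γ * p / β) p x * qp (δ * p) p x *
      (α * β * p) ^ x)

variable {p α β γ δ : ℂ}

lemma qRacahBasis_zero (p c : ℂ) (x : ℕ) : qRacahBasis p c 0 x = 1 := by
  rw [qRacahBasis, qp_zero, qp_zero, one_mul]

lemma qRacahBasis_eq_zero (hp : p ≠ 0) (c : ℂ) {m x : ℕ} (hx : x < m) :
    qRacahBasis p c m x = 0 := by
  rw [qRacahBasis, qp_zpow_neg_eq_zero hp hx, zero_mul]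

lemma qRacahBasis_succ (p c : ℂ) (m x : ℕ) :
    qRacahBasis p c (m + 1) x = qRacahBasis p c m x *
      ((1 - p ^ (-(x : ℤ)) * p ^ m) * (1 - c * p ^ (x + 1) * p ^ m)) := by
  simp only [qRacahBasis, qp_succ]
  ring

lemma qRacah_dual (p α β γ δ : ℂ) (n x : ℕ) :
    qRacah p α β γ δ n x = qRacah p γ δ α β x n := by
  rw [qRacah, qRacah, min_comm]
  refine sum_congr rfl fun m _ => ?_
  rw [mul_comm β δ]
  ring

lemma qRacah_eq_sum_qRacahBasis (hp : p ≠ 0) (α β γ δ : ℂ) (n : ℕ) :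
    qRacah p α β γ δ n =
      ∑ m ∈ range (n + 1), qRacahCoeff p α β γ δ n m • qRacahBasis p (γ * δ) m := by
  ext x
  have support : ∀ m ∈ range (n + 1), m ∉ range (min n x + 1) →
      qRacahCoeff p α β γ δ n m * qRacahBasis p (γ * δ) m x = 0 := by
    intro m hm hmx
    rw [mem_range] at hm hmx
    rw [qRacahBasis_eq_zero hp _ (by lia), mul_zero]
  simp only [Finset.sum_apply, Pi.smul_apply, smul_eq_mul]
  rw [← sum_subset (range_subset_range.2 (by lia)) support, qRacah]
  refine sum_congr rfl fun m _ => ?_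
  rw [qRacahCoeff, qRacahBasis]
  ring

lemma qRacahBasis_forward_difference (hp : p ≠ 0) (c : ℂ) (m x : ℕ) :
    qRacahBasis p c (m + 1) (x + 1) - qRacahBasis p c (m + 1) x =
      -((1 - p ^ (m + 1)) * (1 - c * p ^ (2 * x + 2)) / p ^ (x + 1)) *
        qRacahBasis p (c * p) m x := by
  simp only [qRacahBasis]
  rw [qp_succ_left (p ^ (-((x + 1 : ℕ) : ℤ))), zpow_neg_succ_mul hp, qp_succ,
    qp_succ (p ^ (-(x : ℤ))), qp_succ_left (c * p ^ (x + 1)),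
    show c * p ^ (x + 1 + 1) = c * p * p ^ (x + 1) by ring,
    show c * p ^ (x + 1) * p = c * p * p ^ (x + 1) by ring]
  simp only [_root_.zpow_neg, zpow_natCast]
  field_simp
  ring

lemma one_sub_mul_pow_mul_qRacahBasis (p c : ℂ) (m x : ℕ) :
    (1 - c * p ^ (x + 1)) * qRacahBasis p (c * p) m x =
      (1 - c * p ^ (x + m + 1)) * qRacahBasis p c m x := by
  have h := (qp_succ_left (c * p ^ (x + 1)) p m).symm.trans (qp_succ _ _ _)
  simp only [qRacahBasis]
  rw [show c * p * p ^ (x + 1) = c * p ^ (x + 1) * p by ring]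
  linear_combination qp (p ^ (-(x : ℤ))) p m * h

lemma one_sub_pow_mul_qRacahBasis (hp : p ≠ 0) (c : ℂ) (m x : ℕ) :
    (1 - p ^ (x + 1)) * qRacahBasis p (c * p) m x =
      (p ^ m - p ^ (x + 1)) * qRacahBasis p c m (x + 1) := by
  have h := (qp_succ_left (p ^ (-((x + 1 : ℕ) : ℤ))) p m).symm.trans (qp_succ _ _ _)
  have cancel : p ^ (x + 1) * p ^ (-((x + 1 : ℕ) : ℤ)) = 1 := by
    rw [← zpow_natCast, ← zpow_add₀ hp, add_neg_cancel, zpow_zero]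
  rw [zpow_neg_succ_mul hp] at h
  simp only [qRacahBasis]
  rw [show c * p * p ^ (x + 1) = c * p ^ (x + 1 + 1) by ring]
  generalize p ^ (-((x + 1 : ℕ) : ℤ)) = y at *
  generalize qp (c * p ^ (x + 1 + 1)) p m = r
  linear_combination
    (-p ^ (x + 1) * r) * h - (qp (p ^ (-(x : ℤ))) p m - p ^ m * qp y p m) * r * cancel

lemma qRacahRaise_mul_forward_difference (hp : p ≠ 0) (m : ℕ) {x : ℕ}
    (hc : γ * δ * p ^ (2 * x + 2) ≠ 1) :
    qRacahRaise p α β γ δ x *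
        (qRacahBasis p (γ * δ) (m + 1) (x + 1) - qRacahBasis p (γ * δ) (m + 1) x) =
      -((1 - p ^ (m + 1)) * (1 - α * p ^ (x + 1)) * (1 - β * δ * p ^ (x + 1)) *
          (1 - γ * p ^ (x + 1)) * (1 - γ * δ * p ^ (x + m + 1)) /
        (p ^ (x + 1) * (1 - γ * δ * p ^ (2 * x + 1)))) * qRacahBasis p (γ * δ) m x := by
  have hc' := sub_ne_zero.2 hc.symm
  have absorb := one_sub_mul_pow_mul_qRacahBasis p (γ * δ) m x
  rw [qRacahBasis_forward_difference hp, qRacahRaise]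
  generalize 1 - γ * δ * p ^ (2 * x + 2) = s at *
  generalize 1 - γ * δ * p ^ (2 * x + 1) = t
  generalize 1 - γ * δ * p ^ (x + m + 1) = u at *
  generalize 1 - γ * δ * p ^ (x + 1) = v at *
  generalize qRacahBasis p (γ * δ * p) m x = f at *
  linear_combination (-(1 - p ^ (m + 1)) * (1 - α * p ^ (x + 1)) *
    (1 - β * δ * p ^ (x + 1)) * (1 - γ * p ^ (x + 1)) / (p ^ (x + 1) * t)) *
    (absorb + v * f * mul_inv_cancel₀ hc')

lemma qRacahLower_mul_backward_difference (hp : p ≠ 0) (m : ℕ) {x : ℕ}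
    (hc : x ≠ 0 → γ * δ * p ^ (2 * x) ≠ 1) :
    qRacahLower p α β γ δ x *
        (qRacahBasis p (γ * δ) (m + 1) (x - 1) - qRacahBasis p (γ * δ) (m + 1) x) =
      -(p * (1 - p ^ (m + 1)) * (p ^ x - p ^ m) * (1 - δ * p ^ x) * (β - γ * p ^ x) *
          (α - γ * δ * p ^ x) /
        (p ^ x * (1 - γ * δ * p ^ (2 * x + 1)))) * qRacahBasis p (γ * δ) m x := by
  rcases x with _ | x
  · rcases m with _ | m
    · simp
    · simp [qRacahBasis_eq_zero hp _ m.succ_pos]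
  · have hc' := sub_ne_zero.2 (hc x.succ_ne_zero).symm
    have absorb := one_sub_pow_mul_qRacahBasis hp (γ * δ) m x
    rw [Nat.add_sub_cancel, ← neg_sub, qRacahBasis_forward_difference hp, qRacahLower]
    rw [mul_add_one] at hc' ⊢
    generalize 1 - γ * δ * p ^ (2 * x + 2) = s at *
    generalize 1 - γ * δ * p ^ (2 * x + 2 + 1) = t
    linear_combination (p * (1 - p ^ (m + 1)) * (1 - δ * p ^ (x + 1)) *
      (β - γ * p ^ (x + 1)) * (α - γ * δ * p ^ (x + 1)) / (p ^ (x + 1) * t)) *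
      (absorb + (1 - p ^ (x + 1)) * qRacahBasis p (γ * δ * p) m x * mul_inv_cancel₀ hc')

lemma differenceOperator_qRacahBasis_zero (p α β γ δ : ℂ) :
    differenceOperator (qRacahRaise p α β γ δ) (qRacahLower p α β γ δ)
        (qRacahBasis p (γ * δ) 0) =
      qRacahEigenvalue p α β 0 • qRacahBasis p (γ * δ) 0 := by
  ext x
  simp [differenceOperator_apply, qRacahBasis_zero, qRacahEigenvalue]

lemma differenceOperator_qRacahBasis_succ (hp : p ≠ 0) (hγδ : ∀ x : ℕ, γ * δ * p ^ (x + 1) ≠ 1)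
    (m : ℕ) :
    differenceOperator (qRacahRaise p α β γ δ) (qRacahLower p α β γ δ)
        (qRacahBasis p (γ * δ) (m + 1)) =
      qRacahEigenvalue p α β (m + 1) • qRacahBasis p (γ * δ) (m + 1) +
        qRacahSubdiagonal p α β γ δ (m + 1) • qRacahBasis p (γ * δ) m := by
  ext x
  have hx : 1 - p * (p ^ x) ^ 2 * δ * γ ≠ 0 := by
    convert sub_ne_zero.2 (hγδ (2 * x)).symm using 2
    ring
  have lower_regular : x ≠ 0 → γ * δ * p ^ (2 * x) ≠ 1 := fun h => by
    simpa only [Nat.sub_add_cancel (show 1 ≤ 2 * x by lia)] using hγδ (2 * x - 1)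
  rw [differenceOperator_apply, qRacahRaise_mul_forward_difference hp m (hγδ _),
    qRacahLower_mul_backward_difference hp m lower_regular]
  simp only [Pi.add_apply, Pi.smul_apply, smul_eq_mul, qRacahBasis_succ, qRacahEigenvalue,
    qRacahSubdiagonal, _root_.zpow_neg, zpow_natCast]
  have hpx := pow_ne_zero x hp
  have hpm := pow_ne_zero m hp
  simp only [pow_add, pow_mul', pow_one]
  generalize qRacahBasis p (γ * δ) m x = f
  generalize p ^ x = X at *
  generalize p ^ m = Y at *
  field_simp
  ring

lemma qRacahEigenvalue_ne (hp : p ≠ 0) (h1 : ∀ x : ℕ, p ^ (x + 1) ≠ 1) {m n : ℕ} (hmn : m < n)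
    (hαβ : α * β * p ^ (m + n + 1) ≠ 1) : qRacahEigenvalue p α β m ≠ qRacahEigenvalue p α β n := by
  obtain ⟨d, rfl⟩ := Nat.exists_eq_add_of_lt hmn
  have difference : qRacahEigenvalue p α β (m + d + 1) - qRacahEigenvalue p α β m =
      (1 - p ^ (d + 1)) * (1 - α * β * p ^ (m + (m + d + 1) + 1)) / p ^ (m + d + 1) := by
    simp only [qRacahEigenvalue]
    field_simp
    ring
  refine (sub_ne_zero.1 ?_).symm
  rw [difference]
  exact div_ne_zero (mul_ne_zero (sub_ne_zero.2 (h1 d).symm) (sub_ne_zero.2 hαβ.symm))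
    (pow_ne_zero _ hp)

lemma qRacahCoeff_succ_mul (hp : p ≠ 0) (n : ℕ) {m : ℕ} (h1 : p ^ (m + 1) ≠ 1)
    (hα : α * p ^ (m + 1) ≠ 1) (hβδ : β * δ * p ^ (m + 1) ≠ 1) (hγ : γ * p ^ (m + 1) ≠ 1) :
    qRacahCoeff p α β γ δ n (m + 1) * qRacahSubdiagonal p α β γ δ (m + 1) =
      qRacahCoeff p α β γ δ n m * (qRacahEigenvalue p α β n - qRacahEigenvalue p α β m) := by
  have h1' := sub_ne_zero.2 h1.symm
  have hα' := sub_ne_zero.2 hα.symm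
  have hβδ' := sub_ne_zero.2 hβδ.symm
  have hγ' := sub_ne_zero.2 hγ.symm
  simp only [qRacahCoeff, qp_mul_succ, qp_self_succ]
  rw [qp_succ, qp_succ, qRacahSubdiagonal, qRacahEigenvalue, qRacahEigenvalue]
  simp only [_root_.zpow_neg, zpow_natCast]
  generalize qp ((p ^ n)⁻¹) p m = u
  generalize qp (α * β * p ^ (n + 1)) p m = v
  generalize qp (α * p) p m = a
  generalize qp (β * δ * p) p m = b
  generalize qp (γ * p) p m = c
  generalize qp p p m = d
  generalize 1 - α * p ^ (m + 1) = A at *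
  generalize 1 - β * δ * p ^ (m + 1) = B at *
  generalize 1 - γ * p ^ (m + 1) = C at *
  generalize 1 - p ^ (m + 1) = D at *
  field_simp
  ring

theorem differenceOperator_qRacah (hp : p ≠ 0) (hγδ : ∀ x : ℕ, γ * δ * p ^ (x + 1) ≠ 1) {n : ℕ}
    (hn : ∀ m < n, p ^ (m + 1) ≠ 1 ∧ α * p ^ (m + 1) ≠ 1 ∧ β * δ * p ^ (m + 1) ≠ 1 ∧
      γ * p ^ (m + 1) ≠ 1) :
    differenceOperator (qRacahRaise p α β γ δ) (qRacahLower p α β γ δ) (qRacah p α β γ δ n) =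
      qRacahEigenvalue p α β n • qRacah p α β γ δ n := by
  rw [qRacah_eq_sum_qRacahBasis hp]
  refine map_sum_eq_smul_of_bidiagonal (differenceOperator_qRacahBasis_zero p α β γ δ)
    (differenceOperator_qRacahBasis_succ hp hγδ) fun m hm => ?_
  obtain ⟨h1, hα, hβδ, hγ⟩ := hn m hm
  exact qRacahCoeff_succ_mul hp n h1 hα hβδ hγ

lemma qRacahWeight_succ (hα : α ≠ 0) (hβ : β ≠ 0) (x : ℕ) :
    qRacahWeight p α β γ δ (x + 1) =
      (1 - γ * δ * p ^ (2 * x + 2 + 1)) *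
          (qp (α * p) p x * qp (β * δ * p) p x * qp (γ * p) p x * qp (γ * δ * p) p x *
            ((1 - α * p ^ (x + 1)) * (1 - β * δ * p ^ (x + 1)) * (1 - γ * p ^ (x + 1)) *
              (1 - γ * δ * p ^ (x + 1)))) /
        (qp p p x * qp (γ * δ * p / α) p x * qp (γ * p / β) p x * qp (δ * p) p x *
            (α * β * p) ^ x *
          (p * (1 - p ^ (x + 1)) * (1 - δ * p ^ (x + 1)) * (β - γ * p ^ (x + 1)) *
            (α - γ * δ * p ^ (x + 1)))) := by
  rw [qRacahWeight, qp_self_succ, qp_mul_div_succ _ _ hα, qp_mul_div_succ _ _ hβ, qp_mul_succ,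
    qp_mul_succ, qp_mul_succ, qp_mul_succ, qp_mul_succ, pow_succ (α * β * p),
    mul_add_one 2 x]
  generalize α - γ * δ * p ^ (x + 1) = a
  generalize β - γ * p ^ (x + 1) = b
  congr 1
  · ring
  · linear_combination
      (qp p p x * qp (γ * δ * p / α) p x * qp (γ * p / β) p x * qp (δ * p) p x *
        (α * β * p) ^ x * p * (1 - p ^ (x + 1)) * (1 - δ * p ^ (x + 1)) * a * b) *
      (mul_inv_cancel₀ hα + α * α⁻¹ * mul_inv_cancel₀ hβ)

lemma qRacahWeight_succ_mul_qRacahLower (hα : α ≠ 0) (hβ : β ≠ 0) (hp : p ≠ 0)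
    (h1 : ∀ x : ℕ, p ^ (x + 1) ≠ 1) (hδ : ∀ x : ℕ, δ * p ^ (x + 1) ≠ 1)
    (hγδ : ∀ x : ℕ, γ * δ * p ^ (x + 1) ≠ 1) (hα' : ∀ x : ℕ, γ * δ * p ^ (x + 1) ≠ α)
    (hβ' : ∀ x : ℕ, γ * p ^ (x + 1) ≠ β) (x : ℕ) :
    qRacahWeight p α β γ δ (x + 1) * qRacahLower p α β γ δ (x + 1) =
      qRacahWeight p α β γ δ x * qRacahRaise p α β γ δ x := by
  have hg₁ := sub_ne_zero.2 (hγδ (2 * x)).symm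
  have hg₃ := sub_ne_zero.2 (hγδ (2 * x + 2)).symm
  have hP : p * (1 - p ^ (x + 1)) * (1 - δ * p ^ (x + 1)) * (β - γ * p ^ (x + 1)) *
      (α - γ * δ * p ^ (x + 1)) ≠ 0 := by
    simp only [mul_ne_zero_iff, sub_ne_zero]
    exact ⟨⟨⟨⟨hp, (h1 x).symm⟩, (hδ x).symm⟩, (hβ' x).symm⟩, (hα' x).symm⟩
  have cancel {g₁ g₂ g₃ U N V P : ℂ} (h₁ : g₁ ≠ 0) (h₃ : g₃ ≠ 0) (hP : P ≠ 0) :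
      g₃ * (U * N) / (V * P) * (P / (g₂ * g₃)) = g₁ * U / V * (N / (g₁ * g₂)) := by
    field_simp
  rw [qRacahWeight_succ hα hβ, qRacahLower, qRacahWeight, qRacahRaise, mul_add_one 2 x]
  exact cancel hg₁ hg₃ hP

theorem sum_qRacahWeight_mul_qRacahBasis_mul_qRacah (hα : α ≠ 0) (hβ : β ≠ 0) (hp : p ≠ 0)
    (h1 : ∀ x : ℕ, p ^ (x + 1) ≠ 1) (hδ : ∀ x : ℕ, δ * p ^ (x + 1) ≠ 1)
    (hγδ : ∀ x : ℕ, γ * δ * p ^ (x + 1) ≠ 1) (hα' : ∀ x : ℕ, γ * δ * p ^ (x + 1) ≠ α)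
    (hβ' : ∀ x : ℕ, γ * p ^ (x + 1) ≠ β) {M : ℕ} (hM : qRacahRaise p α β γ δ M = 0) {i n : ℕ}
    (hn : ∀ m < n, α * p ^ (m + 1) ≠ 1 ∧ β * δ * p ^ (m + 1) ≠ 1 ∧ γ * p ^ (m + 1) ≠ 1)
    (hαβ : ∀ m < n, α * β * p ^ (m + n + 1) ≠ 1) (hi : i < n) :
    ∑ x ∈ range (M + 1),
      qRacahWeight p α β γ δ x * (qRacahBasis p (γ * δ) i x * qRacah p α β γ δ n x) = 0 := by
  have balance := qRacahWeight_succ_mul_qRacahLower hα hβ hp h1 hδ hγδ hα' hβ'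
  have eigenfunction := differenceOperator_qRacah hp hγδ fun m hm => ⟨h1 m, hn m hm⟩
  rw [← weightedPairing_apply]
  refine eigenfunctional_apply_eq_zero_of_bidiagonal
    (differenceOperator_qRacahBasis_zero p α β γ δ) (differenceOperator_qRacahBasis_succ hp hγδ)
    (μ := qRacahEigenvalue p α β n) (fun f => ?_)
    fun m hm => qRacahEigenvalue_ne hp h1 (by lia) (hαβ m (by lia))
  rw [weightedPairing_differenceOperator balance hM, eigenfunction, map_smul, LinearMap.smul_apply,
    smul_eq_mul]

end QRacah

section Specialization

variable {p : ℂ}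

lemma qRacahBasis_one_add (hp0 : p ≠ 0) (hp : ¬IsOfFinOrder p) (d i : ℕ) :
    qRacahBasis p 1 i (d + i) =
      (-1) ^ i * p ^ (-(((i + 1).choose 2 + d * i : ℕ) : ℤ)) *
        (qp p p (d + i + i) / qp p p d) := by
  rw [qRacahBasis, qp_zpow_neg_add hp0 hp, one_mul, qp_pow_succ hp]
  have := qp_self_ne_zero hp (d + i)
  field_simp

lemma qRacahWeight_zpow_neg (hp0 : p ≠ 0) (hp : ¬IsOfFinOrder p) (N L k : ℕ) :
    qRacahWeight p (p ^ (-((N + 1 : ℕ) : ℤ))) (p ^ (-((L + 1 : ℕ) : ℤ))) 1 1 k =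
      (1 - p ^ (2 * k + 1)) * (qp (p ^ (-(L : ℤ))) p k * qp (p ^ (-(N : ℤ))) p k) /
        (qp (p ^ (N + 2)) p k * qp (p ^ (L + 2)) p k) * p ^ (k * (L + N + 1)) := by
  have div_zpow_neg (m : ℕ) : p / p ^ (-((m + 1 : ℕ) : ℤ)) = p ^ (m + 2) := by
    rw [_root_.zpow_neg, zpow_natCast, div_inv_eq_mul, ← pow_succ']
  have base : p ^ (-((N + 1 : ℕ) : ℤ)) * p ^ (-((L + 1 : ℕ) : ℤ)) * p = (p ^ (L + N + 1))⁻¹ := by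
    rw [mul_assoc, zpow_neg_succ_mul hp0, ← zpow_add₀ hp0, ← zpow_natCast, ← _root_.zpow_neg]
    congr 1
    push_cast
    ring
  have hk := qp_self_ne_zero hp k
  simp only [qRacahWeight, mul_one, one_mul, zpow_neg_succ_mul hp0, div_zpow_neg, base, inv_pow,
    ← pow_mul']
  generalize qp p p k = F at *
  field_simp

lemma qp_pow_div_qp_pow (hp : ¬IsOfFinOrder p) {N k : ℕ} (hk : k ≤ N) :
    qp (p ^ (k + 1)) p (N - k) / qp (p ^ (2 * k + 2)) p (N - k) =
      qp p p N * qp p p (2 * k) * (1 - p ^ (2 * k + 1)) /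
        (qp p p k * qp p p (N + 1) * qp (p ^ (N + 2)) p k) := by
  have index : 2 * k + 1 + (N - k) = N + 1 + k := by lia
  have hN := qp_self_ne_zero hp (N + 1)
  rw [qp_pow_succ hp k, qp_pow_succ hp (2 * k + 1), qp_pow_succ hp (N + 1), index,
    Nat.add_sub_cancel' hk, qp_self_succ]
  field_simp

lemma summand_exponent_eq (L n i j k : ℕ) :
    (2 * (k : ℤ) + 1) * (k - i) + j * (2 * k + 1) + 2 * k * (L + n + 1) - k ^ 2 =
      (i + j : ℕ) +
        2 * (((k + 1).choose 2 : ℤ) - i * (k + 1) + k * (L + (n + j : ℕ) + 1)) := by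
  have triangle := add_one_choose_two_mul_two k
  zify at triangle
  push_cast
  linear_combination -triangle

lemma summand_eq_mul_qRacahWeight_mul_qRacahBasis (hp0 : p ≠ 0) (hp : ¬IsOfFinOrder p) (L : ℕ)
    {N i k : ℕ} (hik : i ≤ k) (hkN : k ≤ N) :
    (-1) ^ k * p ^ (((k + 1).choose 2 : ℤ) - i * (k + 1) + k * (L + N + 1)) *
        (qp p p k * qp p p (k + i) / qp p p (2 * k)) *
        (qp (p ^ (-(L : ℤ))) p k * qp (p ^ (-(N : ℤ))) p k /
          (qp p p k * qp (p ^ (L + 2)) p k)) *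
        (qp (p ^ (-(k : ℤ))) p (k - i) / qp p p (k - i)) *
        (qp (p ^ (k + 1)) p (N - k) / qp (p ^ (2 * k + 2)) p (N - k)) =
      qp p p N / (qp p p i * qp p p (N + 1)) *
        (qRacahWeight p (p ^ (-((N + 1 : ℕ) : ℤ))) (p ^ (-((L + 1 : ℕ) : ℤ))) 1 1 k *
          qRacahBasis p 1 i k) := by
  obtain ⟨d, rfl⟩ := Nat.exists_eq_add_of_le' hik
  have exponent : p ^ (((d + i + 1).choose 2 : ℤ) - i * ((d + i : ℕ) + 1) +
      (d + i : ℕ) * (L + N + 1)) * p ^ (-(((d + 1).choose 2 + i * d : ℕ) : ℤ)) =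
      p ^ ((d + i) * (L + N + 1)) * p ^ (-(((i + 1).choose 2 + d * i : ℕ) : ℤ)) := by
    have triangle := add_one_choose_two_mul_two i
    rw [← zpow_natCast p ((d + i) * _), ← zpow_add₀ hp0, ← zpow_add₀ hp0,
      add_add_one_choose_two]
    congr 1
    push_cast
    zify at triangle
    linear_combination triangle
  have sign : (-1 : ℂ) ^ (d + i) * (-1) ^ d = (-1) ^ i := by
    rw [pow_add, mul_right_comm, ← mul_pow, neg_one_mul, neg_neg, one_pow, one_mul]
  have cancel {s s' z z' y y' F₁ F₂ F₃ F₄ F₅ F₆ F₇ G H J K : ℂ} (h₁ : F₁ ≠ 0) (h₂ : F₂ ≠ 0)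
      (hz : z * z' = y * y') :
      s * z * (F₁ * F₃ / F₂) * (H / (F₁ * K)) * (s' * z' * (F₁ / F₅) / F₄) *
          (F₆ * F₂ * G / (F₁ * F₇ * J)) =
        F₆ / (F₅ * F₇) * (G * H / (J * K) * y * (s * s' * y' * (F₃ / F₄))) := by
    calc
      _ = s * s' * (z * z') * (F₃ * F₆ * G * H / (F₄ * F₅ * F₇ * J * K)) *
          (F₁ / F₁) ^ 2 * (F₂ / F₂) := by ring
      _ = _ := by
        rw [hz, div_self h₁, div_self h₂]
        ring
  rw [qRacahWeight_zpow_neg hp0 hp, qRacahBasis_one_add hp0 hp, qp_pow_div_qp_pow hp hkN,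
    Nat.add_sub_cancel, add_comm d i, qp_zpow_neg_add hp0 hp, add_comm i d, ← sign]
  exact cancel (qp_self_ne_zero hp _) (qp_self_ne_zero hp _) exponent

theorem sum_qRacahWeight_mul_qRacahBasis_mul_dual_qRacah (hp0 : p ≠ 0) (hp : ¬IsOfFinOrder p)
    {L N i j : ℕ} (hij : i < j) (hjL : j ≤ L) (hjN : j ≤ N) :
    ∑ k ∈ Icc i (min L N),
      qRacahWeight p (p ^ (-((N + 1 : ℕ) : ℤ))) (p ^ (-((L + 1 : ℕ) : ℤ))) 1 1 k *
        (qRacahBasis p 1 i k *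
          qRacah p 1 1 (p ^ (-((N + 1 : ℕ) : ℤ))) (p ^ (-((L + 1 : ℕ) : ℤ))) k j) = 0 := by
  have pow_ne (x : ℕ) : p ^ (x + 1) ≠ 1 := pow_ne_one_of_not_isOfFinOrder hp x.succ_ne_zero
  have zpow_ne {z : ℤ} (hz : z ≠ 0) : p ^ z ≠ 1 := fun h =>
    hp (isOfFinOrder_iff_zpow_eq_one.2 ⟨z, hz, h⟩)
  have mul_ne {a m : ℕ} (h : m < a) : p ^ (-((a + 1 : ℕ) : ℤ)) * p ^ (m + 1) ≠ 1 := by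
    rw [← zpow_natCast, ← zpow_add₀ hp0]
    exact zpow_ne (by lia)
  have mul_self (a : ℕ) : p ^ (-((a + 1 : ℕ) : ℤ)) * p ^ (a + 1) = 1 := by
    rw [← zpow_natCast, ← zpow_add₀ hp0, neg_add_cancel, zpow_zero]
  have pow_ne_zpow (a x : ℕ) : p ^ (x + 1) ≠ p ^ (-((a + 1 : ℕ) : ℤ)) := fun h =>
    pow_ne (x + 1 + a) (by rw [add_assoc, pow_add, h, mul_self])
  have boundary : qRacahRaise p (p ^ (-((N + 1 : ℕ) : ℤ))) (p ^ (-((L + 1 : ℕ) : ℤ))) 1 1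
      (min L N) = 0 := by
    rcases min_choice L N with h | h <;>
      simp only [h, qRacahRaise, mul_one, mul_self, sub_self, mul_zero, zero_mul, zero_div]
  have orthogonality := sum_qRacahWeight_mul_qRacahBasis_mul_qRacah (γ := 1) (δ := 1)
    (zpow_ne_zero _ hp0) (zpow_ne_zero _ hp0) hp0 pow_ne (by simpa using pow_ne)
    (by simpa using pow_ne) (by simpa using pow_ne_zpow N) (by simpa using pow_ne_zpow L) boundary
    (fun m hm => ⟨mul_ne (by lia), by simpa using mul_ne (by lia), by simpa using pow_ne m⟩)
    (fun m hm => by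
      rw [← zpow_natCast, ← zpow_add₀ hp0, ← zpow_add₀ hp0]
      exact zpow_ne (by lia)) hij
  rw [mul_one] at orthogonality
  simp only [qRacah_dual p 1 1]
  rw [← orthogonality]
  refine sum_subset (fun k hk => mem_range.2 (by grind)) fun k _ hk => ?_
  rw [qRacahBasis_eq_zero hp0 1 (by grind), zero_mul, mul_zero]

end Specialization

theorem stmt10_general (q : ℂ) (hq0 : q ≠ 0) (hq : ¬IsOfFinOrder q) (L n i j : ℕ) (hij : i < j)
    (hj : j ≤ L) :
    ∑ k ∈ Finset.Icc i (min L (n + j)),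
        (-1 : ℂ) ^ k *
            q ^ ((2 * (k : ℤ) + 1) * ((k : ℤ) - (i : ℤ)) + (j : ℤ) * (2 * (k : ℤ) + 1) +
                2 * (k : ℤ) * ((L : ℤ) + (n : ℤ) + 1) - (k : ℤ) ^ 2) *
            (qp (q ^ 2) (q ^ 2) k * qp (q ^ 2) (q ^ 2) (k + i) / qp (q ^ 2) (q ^ 2) (2 * k)) *
            (qp (q ^ (-(2 * (L : ℤ)))) (q ^ 2) k *
                qp (q ^ (-(2 * (j : ℤ) + 2 * (n : ℤ)))) (q ^ 2) k /
              (qp (q ^ 2) (q ^ 2) k * qp (q ^ (2 * (L : ℤ) + 4)) (q ^ 2) k)) *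
            (qp (q ^ (-(2 * (k : ℤ)))) (q ^ 2) (k - i) / qp (q ^ 2) (q ^ 2) (k - i)) *
            (qp (q ^ (2 * (k : ℤ) + 2)) (q ^ 2) (n + j - k) /
              qp (q ^ (4 * (k : ℤ) + 4)) (q ^ 2) (n + j - k)) *
            qRacah (q ^ 2) 1 1 (q ^ (-(2 * (n : ℤ) + 2 * (j : ℤ) + 2)))
              (q ^ (-(2 * (L : ℤ) + 2))) k j =
      0 := by
  have hp0 : q ^ 2 ≠ 0 := pow_ne_zero 2 hq0
  have hp : ¬IsOfFinOrder (q ^ 2) := fun h => hq (h.of_pow two_ne_zero)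
  have even_zpow {z m : ℤ} (h : z = 2 * m) : q ^ z = (q ^ 2) ^ m := by
    rw [h, _root_.zpow_mul, zpow_ofNat]
  have even_pow {z : ℤ} {m : ℕ} (h : z = 2 * m) : q ^ z = (q ^ 2) ^ m := by
    rw [even_zpow h, zpow_natCast]
  rw [← mul_zero (q ^ (i + j) * (qp (q ^ 2) (q ^ 2) (n + j) /
      (qp (q ^ 2) (q ^ 2) i * qp (q ^ 2) (q ^ 2) (n + j + 1)))),
    ← sum_qRacahWeight_mul_qRacahBasis_mul_dual_qRacah hp0 hp hij hj (Nat.le_add_left j n), mul_sum]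
  refine sum_congr rfl fun k hk => ?_
  obtain ⟨hik, hk⟩ := mem_Icc.1 hk
  have summand := summand_eq_mul_qRacahWeight_mul_qRacahBasis hp0 hp L hik
    (hk.trans (min_le_right _ _))
  rw [summand_exponent_eq, zpow_add₀ hq0, zpow_natCast, even_zpow rfl,
    even_zpow (m := -L) (by ring), even_zpow (m := -(n + j : ℕ)) (by push_cast; ring),
    even_pow (m := L + 2) (by push_cast; ring), even_zpow (m := -k) (by ring),
    even_pow (m := k + 1) (by push_cast; ring), even_pow (m := 2 * k + 2) (by push_cast; ring),
    even_zpow (m := -(n + j + 1 : ℕ)) (by push_cast; ring),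
    even_zpow (m := -(L + 1 : ℕ)) (by push_cast; ring)]
  linear_combination q ^ (i + j) * summand *
    qRacah (q ^ 2) 1 1 ((q ^ 2) ^ (-((n + j + 1 : ℕ) : ℤ))) ((q ^ 2) ^ (-((L + 1 : ℕ) : ℤ))) k j

/-- vanishing of the coefficient of `x^{n+j-i}` in the `(i,j)`-entry of
`P_n` for `i < j`. -/
theorem stmt10 (q : ℝ) (hq0 : 0 < q) (hq1 : q < 1) (L : ℕ)
    (n i j : ℕ) (hij : i < j) (hj : j ≤ L) :
    ∑ k ∈ Finset.Icc i (min L (n + j)),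
        (-1 : ℂ) ^ k *
            (q : ℂ) ^ ((2 * (k : ℤ) + 1) * ((k : ℤ) - (i : ℤ)) + (j : ℤ) * (2 * (k : ℤ) + 1) +
                2 * (k : ℤ) * ((L : ℤ) + (n : ℤ) + 1) - (k : ℤ) ^ 2) *
            (qp ((q : ℂ) ^ 2) ((q : ℂ) ^ 2) k * qp ((q : ℂ) ^ 2) ((q : ℂ) ^ 2) (k + i) /
              qp ((q : ℂ) ^ 2) ((q : ℂ) ^ 2) (2 * k)) *
            (qp ((q : ℂ) ^ (-(2 * (L : ℤ)))) ((q : ℂ) ^ 2) k *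
                qp ((q : ℂ) ^ (-(2 * (j : ℤ) + 2 * (n : ℤ)))) ((q : ℂ) ^ 2) k /
              (qp ((q : ℂ) ^ 2) ((q : ℂ) ^ 2) k *
                qp ((q : ℂ) ^ (2 * (L : ℤ) + 4)) ((q : ℂ) ^ 2) k)) *
            (qp ((q : ℂ) ^ (-(2 * (k : ℤ)))) ((q : ℂ) ^ 2) (k - i) /
              qp ((q : ℂ) ^ 2) ((q : ℂ) ^ 2) (k - i)) *
            (qp ((q : ℂ) ^ (2 * (k : ℤ) + 2)) ((q : ℂ) ^ 2) (n + j - k) /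
              qp ((q : ℂ) ^ (4 * (k : ℤ) + 4)) ((q : ℂ) ^ 2) (n + j - k)) *
            qRacah ((q : ℂ) ^ 2) 1 1 ((q : ℂ) ^ (-(2 * (n : ℤ) + 2 * (j : ℤ) + 2)))
              ((q : ℂ) ^ (-(2 * (L : ℤ) + 2))) k j =
      0 :=
  stmt10_general q (by exact_mod_cast hq0.ne')
    (fun h => by simpa [abs_of_pos hq0, hq1.ne] using h.norm_eq_one) L n i j hij hj

end
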